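/- Let λ be a partition of d. Then, as endomorphisms of K[I(n,d)], Σ_{w ∈ S_d, cycle type of w = λ} ρ(w) = Σ_{D ∈ M(n,d)} c_{λ,D} · ξ_D, where the natural number c_{λ,D} = #{w ∈ S_d : cycle type of w is λ and w • j = i} for any (i,j) ∈ I(n,d) × I(n,d) with D(i,j) = D (this count is independent of the choice of such (i,j)). -/

import Mathlib

/-!
Evaluated at `f` and `i`, both sides have the form `∑ j, a i j • f j`. On the right
`a i j = c (D(i,j))`, since exactly one `ξ_D` involves `j` in its `i`-th coordinate. On the left
`a i j` counts the `w` in the class with `i ∘ w = j`, that is, with `w • j = i`.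
-/

open Finset

noncomputable section

/-- The action of `S_d` on `I(n,d) = Fin d → Fin n`, `w • i = i ∘ w⁻¹`. -/
def permAct {n d : ℕ} (w : Equiv.Perm (Fin d)) (i : Fin d → Fin n) : Fin d → Fin n :=
  i ∘ ⇑w⁻¹

/-- The matrix `D(i,j)` with `(a,b)` entry `#{k | i k = a ∧ j k = b}`. -/
def Dmat {n d : ℕ} (i j : Fin d → Fin n) : Matrix (Fin n) (Fin n) ℕ :=
  fun a b => (Finset.univ.filter (fun k => i k = a ∧ j k = b)).card

/-- `M(n,d)`: matrices of naturals with entries summing to `d`. -/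
def Mset (n d : ℕ) : Set (Matrix (Fin n) (Fin n) ℕ) :=
  {D | ∑ a, ∑ b, D a b = d}

theorem Mset_finite (n d : ℕ) : (Mset n d).Finite := by
  apply Set.Finite.subset (Set.finite_range
    (fun f : Fin n → Fin n → Fin (d + 1) => (fun a b => ((f a b : ℕ)) : Matrix (Fin n) (Fin n) ℕ)))
  intro D hD
  have hle : ∀ a b, D a b ≤ d := by
    intro a b
    have h1 : D a b ≤ ∑ b', D a b' :=
      Finset.single_le_sum (fun _ _ => Nat.zero_le _) (Finset.mem_univ b)
    have h2 : (∑ b', D a b') ≤ ∑ a', ∑ b', D a' b' :=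
      Finset.single_le_sum (f := fun a' => ∑ b', D a' b') (fun _ _ => Nat.zero_le _)
        (Finset.mem_univ a)
    have h3 : ∑ a', ∑ b', D a' b' = d := hD
    omega
  exact ⟨fun a b => ⟨D a b, Nat.lt_succ_of_le (hle a b)⟩, rfl⟩

/-- `M(n,d)` as a finset. -/
def MFin (n d : ℕ) : Finset (Matrix (Fin n) (Fin n) ℕ) := (Mset_finite n d).toFinset

/-- The action of `w ∈ S_d` on `K[I(n,d)]`, `(w • f)(i) = f (w⁻¹ • i)`, as a linear map. -/
def rho (K : Type*) [Field K] {n d : ℕ} (w : Equiv.Perm (Fin d)) :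
    Module.End K ((Fin d → Fin n) → K) where
  toFun f := fun i => f (fun k => i (w k))
  map_add' _ _ := rfl
  map_smul' _ _ := rfl

/-- The operator `ξ_D` on `K[I(n,d)]`. -/
def xi (K : Type*) [Field K] {n d : ℕ} (D : Matrix (Fin n) (Fin n) ℕ) :
    Module.End K ((Fin d → Fin n) → K) where
  toFun f := fun i => ∑ j ∈ Finset.univ.filter (fun j => Dmat i j = D), f j
  map_add' f g := by funext i; simp [Finset.sum_add_distrib]
  map_smul' c f := by funext i; simp [Finset.mul_sum]

/-- `w ∈ S_d` has cycle type the partition `λ` of `d` (fixed points counted as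
`1`-cycles). -/
def HasCycleType {d : ℕ} (w : Equiv.Perm (Fin d)) (lam : Nat.Partition d) : Prop :=
  w.partition.parts = lam.parts

instance {d : ℕ} (lam : Nat.Partition d) :
    DecidablePred (fun w : Equiv.Perm (Fin d) => HasCycleType w lam) := fun w =>
  inferInstanceAs (Decidable (w.partition.parts = lam.parts))

theorem permAct_eq_iff {n d : ℕ} (w : Equiv.Perm (Fin d)) (i j : Fin d → Fin n) :
    permAct w j = i ↔ i ∘ w = j :=
  (w.comp_symm_eq i j).trans eq_comm

theorem Dmat_mem_MFin {n d : ℕ} (i j : Fin d → Fin n) : Dmat i j ∈ MFin n d := by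
  have hsum : d = ∑ p : Fin n × Fin n, #{k | (i k, j k) = p} := by
    simpa using card_eq_sum_card_fiberwise (s := univ) (t := univ)
      (f := fun k => (i k, j k)) (fun _ _ => mem_coe.mpr (mem_univ _))
  simpa [MFin, Mset, Dmat, Fintype.sum_prod_type] using hsum.symm

section

variable (K : Type*) [Field K] {n d : ℕ}

theorem sum_rho_apply (S : Finset (Equiv.Perm (Fin d))) (f : (Fin d → Fin n) → K)
    (i : Fin d → Fin n) :
    (∑ w ∈ S, rho K w) f i = ∑ j, #{w ∈ S | permAct w j = i} • f j := by
  calc (∑ w ∈ S, rho K w) f i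
      = ∑ w ∈ S, f (i ∘ w) := by
        rw [LinearMap.sum_apply, Finset.sum_apply]
        rfl
    _ = ∑ j, #{w ∈ S | permAct w j = i} • f j := by
        simp only [permAct_eq_iff, ← sum_fiberwise' S (fun w => i ∘ ⇑w) f, sum_const]

theorem sum_smul_xi_apply {R : Type*} [Monoid R] [DistribMulAction R K] [SMulCommClass K R K]
    (c : Matrix (Fin n) (Fin n) ℕ → R) (f : (Fin d → Fin n) → K) (i : Fin d → Fin n) :
    (∑ D ∈ MFin n d, c D • xi K D) f i = ∑ j, c (Dmat i j) • f j := by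
  calc (∑ D ∈ MFin n d, c D • xi K D) f i
      = ∑ D ∈ MFin n d, ∑ j with Dmat i j = D, c D • f j := by
        simp only [LinearMap.sum_apply, LinearMap.smul_apply, Finset.sum_apply, Pi.smul_apply,
          xi, LinearMap.coe_mk, AddHom.coe_mk, smul_sum]
    _ = ∑ D ∈ MFin n d, ∑ j with Dmat i j = D, c (Dmat i j) • f j :=
        sum_congr rfl fun D _ => sum_congr rfl fun j hj => by rw [(mem_filter.mp hj).2]
    _ = ∑ j, c (Dmat i j) • f j :=
        sum_fiberwise_of_maps_to (fun j _ => Dmat_mem_MFin i j) _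

theorem class_sum_eq_sum_c_xi_general (S : Finset (Equiv.Perm (Fin d)))
    (c : Matrix (Fin n) (Fin n) ℕ → ℕ)
    (hc : ∀ i j : Fin d → Fin n, c (Dmat i j) = #{w ∈ S | permAct w j = i}) :
    ∑ w ∈ S, rho K (n := n) w = ∑ D ∈ MFin n d, c D • xi K D := by
  refine LinearMap.ext fun f => funext fun i => ?_
  simp only [sum_rho_apply, sum_smul_xi_apply, hc]

end

/-- The class sum `∑_{ρ(w) = λ} ρ(w)` expands as `∑_D c_{λ,D} ξ_D` in the Schur algebra,
where `c_{λ,D} = #{w : cycle type of w is λ and w • j = i}` for any `(i,j)` with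
`D(i,j) = D`. -/
theorem class_sum_eq_sum_c_xi (K : Type*) [Field K] (n d : ℕ) (hn : 0 < n) (hd : 0 < d)
    (lam : Nat.Partition d) (c : Matrix (Fin n) (Fin n) ℕ → ℕ)
    (hc : ∀ i j : Fin d → Fin n,
      c (Dmat i j)
        = Nat.card {w : Equiv.Perm (Fin d) // HasCycleType w lam ∧ permAct w j = i}) :
    ∑ w ∈ Finset.univ.filter (fun w : Equiv.Perm (Fin d) => HasCycleType w lam),
        rho K (n := n) w
      = ∑ D ∈ MFin n d, c D • xi K D :=
  class_sum_eq_sum_c_xi_general K _ c fun i j => by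
    rw [hc, filter_filter]
    exact Nat.subtype_card _ fun w => by simp

end
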